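/- If an admissible pair (φ,ψ) satisfies E1(φ,ψ) = 0, then φ(x) = 0 and ψ(x) = 0 for all x ∈ [-m,ℓ]. -/

import Mathlib

/-!
Each term of `E1` is the integral of a nonnegative piecewise continuous function, so `E1 = 0`
forces `ψ' + kφ`, `φ' - kψ` and `ψ' - kφ` to vanish inside both layers. Subtracting the first and
the last gives `φ = 0`, hence `φ' = 0`, and then the middle one gives `ψ = 0`. Continuity carries
this to the interface and the outer boundary.
-/

open Set MeasureTheory intervalIntegral Filter Topology

noncomputable section

namespace RT

/-- The piecewise integral `∫_{-m}^0 + ∫_0^ℓ`. -/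
def pwInt (m l : ℝ) (f : ℝ → ℝ) : ℝ :=
  (∫ x in (-m)..(0:ℝ), f x) + ∫ x in (0:ℝ)..l, f x

/-- `f` restricted to `[-m,0)` extends continuously to `[-m,0]`, and `f` restricted to
`(0,ℓ]` extends continuously to `[0,ℓ]`. -/
def PiecewiseCont (m l : ℝ) (f : ℝ → ℝ) : Prop :=
  (∃ F : ℝ → ℝ, ContinuousOn F (Icc (-m) 0) ∧ EqOn f F (Ico (-m) 0)) ∧
  (∃ F : ℝ → ℝ, ContinuousOn F (Icc 0 l) ∧ EqOn f F (Ioc 0 l))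

/-- A profile function: the restriction to `[-m,0)` extends continuously to `[-m,0]`, and
the function is continuous on `[0,ℓ]` (hence right-continuous at `0`). -/
def Profile (m l : ℝ) (f : ℝ → ℝ) : Prop :=
  (∃ F : ℝ → ℝ, ContinuousOn F (Icc (-m) 0) ∧ EqOn f F (Ico (-m) 0)) ∧
  ContinuousOn f (Icc 0 l)

/-- The four steady-state profiles `ρ0, p, ε0, δ0` with their positivity assumptions. -/
def ProfilesHyp (m l : ℝ) (ρ0 p ε0 δ0 : ℝ → ℝ) : Prop :=
  Profile m l ρ0 ∧ Profile m l p ∧ Profile m l ε0 ∧ Profile m l δ0 ∧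
  (∀ x ∈ Icc (-m) l, 0 < ρ0 x) ∧ (∀ x ∈ Icc (-m) l, 0 < p x) ∧
  (∀ x ∈ Icc (-m) l, 0 < ε0 x) ∧ (∀ x ∈ Icc (-m) l, 0 ≤ δ0 x)

/-- `f` is continuous on `[-m,ℓ]` and continuously differentiable on `[-m,0]` and on
`[0,ℓ]`, with piecewise derivative `fd`. -/
def PiecewiseC1 (m l : ℝ) (f fd : ℝ → ℝ) : Prop :=
  ContinuousOn f (Icc (-m) l) ∧
  (∀ x ∈ Ico (-m) 0, HasDerivWithinAt f (fd x) (Icc (-m) 0) x) ∧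
  (∀ x ∈ Ioc 0 l, HasDerivWithinAt f (fd x) (Icc 0 l) x) ∧
  PiecewiseCont m l fd

/-- An admissible pair `(φ,ψ)` with piecewise derivatives `(φd,ψd)`. -/
def Admissible (m l : ℝ) (φ ψ φd ψd : ℝ → ℝ) : Prop :=
  PiecewiseC1 m l φ φd ∧ PiecewiseC1 m l ψ ψd ∧
  φ (-m) = 0 ∧ φ l = 0 ∧ ψ (-m) = 0 ∧ ψ l = 0

/-- The energy `E(φ,ψ;s)`. -/
def energyE (m l g σ k : ℝ) (ρ0 p ε0 δ0 : ℝ → ℝ) (φ ψ φd ψd : ℝ → ℝ) (s : ℝ) : ℝ :=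
  σ * k ^ 2 / 2 * (ψ 0) ^ 2
  + (1 / 2) * pwInt m l (fun x =>
      (s * δ0 x + p x * ρ0 x) * (ψd x + k * φ x) ^ 2 - 2 * g * ρ0 x * k * φ x * ψ x)
  + (s / 2) * pwInt m l (fun x =>
      ε0 x * ((φd x - k * ψ x) ^ 2 + (ψd x - k * φ x) ^ 2
        + (1 / 3) * (ψd x + k * φ x) ^ 2))

/-- The normalization functional `J(φ,ψ)`. -/
def energyJ (m l : ℝ) (ρ0 : ℝ → ℝ) (φ ψ : ℝ → ℝ) : ℝ :=
  (1 / 2) * pwInt m l (fun x => ρ0 x * ((φ x) ^ 2 + (ψ x) ^ 2))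

/-- The viscous part `E1(φ,ψ)` of the energy. -/
def energyE1 (m l k : ℝ) (ε0 δ0 : ℝ → ℝ) (φ ψ φd ψd : ℝ → ℝ) : ℝ :=
  (1 / 2) * pwInt m l (fun x => (δ0 x + ε0 x / 3) * (ψd x + k * φ x) ^ 2)
  + (1 / 2) * pwInt m l (fun x =>
      ε0 x * ((φd x - k * ψ x) ^ 2 + (ψd x - k * φ x) ^ 2))

/-- `μ(s)`: the infimum of `E(·,·;s)` over admissible pairs with `J = 1`. -/
def muInf (m l g σ k : ℝ) (ρ0 p ε0 δ0 : ℝ → ℝ) (s : ℝ) : ℝ :=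
  sInf { e : ℝ | ∃ φ ψ φd ψd : ℝ → ℝ, Admissible m l φ ψ φd ψd ∧
    energyJ m l ρ0 φ ψ = 1 ∧ e = energyE m l g σ k ρ0 p ε0 δ0 φ ψ φd ψd s }

/-- The hydrostatic steady-state relation `ρ0' = -g ρ0 / p` on each piece. -/
def Hydrostatic (m l g : ℝ) (ρ0 p : ℝ → ℝ) : Prop :=
  (∀ x ∈ Ico (-m) 0, HasDerivWithinAt ρ0 (-g * ρ0 x / p x) (Ico (-m) 0) x) ∧
  (∀ x ∈ Ioc 0 l, HasDerivWithinAt ρ0 (-g * ρ0 x / p x) (Ioc 0 l) x)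

end RT

namespace RT

section

variable {m l k : ℝ} {f g : ℝ → ℝ}

/-- The two open fluid layers `(-m,0)` and `(0,ℓ)`: the interval `[-m,ℓ]` without the interface
and the outer boundary, which no integral sees. -/
def layers (m l : ℝ) : Set ℝ :=
  Ioo (-m) 0 ∪ Ioo 0 l

lemma isOpen_layers : IsOpen (layers m l) :=
  isOpen_Ioo.union isOpen_Ioo

lemma layers_subset_Icc (hm : 0 ≤ m) (hl : 0 ≤ l) : layers m l ⊆ Icc (-m) l :=
  union_subset (Ioo_subset_Icc_self.trans (Icc_subset_Icc_right hl))
    (Ioo_subset_Icc_self.trans (Icc_subset_Icc_left (neg_nonpos.2 hm)))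

lemma Icc_subset_closure_layers (hm : 0 < m) (hl : 0 < l) :
    Icc (-m) l ⊆ closure (layers m l) := by
  rw [layers, closure_union, closure_Ioo (neg_neg_of_pos hm).ne, closure_Ioo hl.ne]
  exact Icc_subset_Icc_union_Icc

namespace PiecewiseCont

lemma comp₂ {Φ : ℝ → ℝ → ℝ} (hΦ : Continuous (Function.uncurry Φ))
    (hf : PiecewiseCont m l f) (hg : PiecewiseCont m l g) :
    PiecewiseCont m l (fun x => Φ (f x) (g x)) := by
  obtain ⟨⟨F₁, hF₁, hfF₁⟩, F₂, hF₂, hfF₂⟩ := hf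
  obtain ⟨⟨G₁, hG₁, hgG₁⟩, G₂, hG₂, hgG₂⟩ := hg
  exact ⟨⟨fun x => Φ (F₁ x) (G₁ x), hΦ.comp_continuousOn (hF₁.prodMk hG₁),
      fun x hx => congrArg₂ Φ (hfF₁ hx) (hgG₁ hx)⟩,
    ⟨fun x => Φ (F₂ x) (G₂ x), hΦ.comp_continuousOn (hF₂.prodMk hG₂),
      fun x hx => congrArg₂ Φ (hfF₂ hx) (hgG₂ hx)⟩⟩

lemma comp {Φ : ℝ → ℝ} (hΦ : Continuous Φ) (hf : PiecewiseCont m l f) :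
    PiecewiseCont m l (fun x => Φ (f x)) :=
  comp₂ (Φ := fun y _ => Φ y) (hΦ.comp continuous_fst) hf hf

lemma add (hf : PiecewiseCont m l f) (hg : PiecewiseCont m l g) :
    PiecewiseCont m l (fun x => f x + g x) :=
  comp₂ continuous_add hf hg

lemma sub (hf : PiecewiseCont m l f) (hg : PiecewiseCont m l g) :
    PiecewiseCont m l (fun x => f x - g x) :=
  comp₂ continuous_sub hf hg

lemma mul (hf : PiecewiseCont m l f) (hg : PiecewiseCont m l g) :
    PiecewiseCont m l (fun x => f x * g x) :=
  comp₂ continuous_mul hf hg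

lemma const_mul (c : ℝ) (hf : PiecewiseCont m l f) : PiecewiseCont m l (fun x => c * f x) :=
  comp (continuous_const_mul c) hf

lemma div_const (c : ℝ) (hf : PiecewiseCont m l f) : PiecewiseCont m l (fun x => f x / c) :=
  comp (continuous_id.div_const c) hf

lemma pow (n : ℕ) (hf : PiecewiseCont m l f) : PiecewiseCont m l (fun x => f x ^ n) :=
  comp (continuous_pow n) hf

lemma continuousOn_layers (hf : PiecewiseCont m l f) : ContinuousOn f (layers m l) := by
  obtain ⟨⟨F₁, hF₁, hfF₁⟩, F₂, hF₂, hfF₂⟩ := hf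
  exact ((hF₁.mono Ioo_subset_Icc_self).congr (hfF₁.mono Ioo_subset_Ico_self)).union_of_isOpen
    ((hF₂.mono Ioo_subset_Icc_self).congr (hfF₂.mono Ioo_subset_Ioc_self)) isOpen_Ioo isOpen_Ioo

lemma integrableOn_layers (hf : PiecewiseCont m l f) : IntegrableOn f (layers m l) := by
  obtain ⟨⟨F₁, hF₁, hfF₁⟩, F₂, hF₂, hfF₂⟩ := hf
  exact ((hF₁.integrableOn_Icc.mono_set Ioo_subset_Icc_self).congr_fun
      (hfF₁.mono Ioo_subset_Ico_self).symm measurableSet_Ioo).union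
    ((hF₂.integrableOn_Icc.mono_set Ioo_subset_Icc_self).congr_fun
      (hfF₂.mono Ioo_subset_Ioc_self).symm measurableSet_Ioo)

end PiecewiseCont

lemma pwInt_eq_setIntegral_layers (hm : 0 ≤ m) (hl : 0 ≤ l) (hf : IntegrableOn f (layers m l)) :
    pwInt m l f = ∫ x in layers m l, f x := by
  have hdisj : Disjoint (Ioo (-m) 0) (Ioo 0 l) :=
    disjoint_left.2 fun _ hx hx' => hx.2.not_gt hx'.1
  rw [pwInt, integral_of_le (neg_nonpos.2 hm), integral_of_le hl, integral_Ioc_eq_integral_Ioo,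
    integral_Ioc_eq_integral_Ioo, layers,
    setIntegral_union hdisj measurableSet_Ioo hf.left_of_union hf.right_of_union]

lemma PiecewiseCont.pwInt_nonneg (hm : 0 ≤ m) (hl : 0 ≤ l) (hf : PiecewiseCont m l f)
    (hf₀ : ∀ x ∈ layers m l, 0 ≤ f x) : 0 ≤ pwInt m l f := by
  rw [pwInt_eq_setIntegral_layers hm hl hf.integrableOn_layers]
  exact setIntegral_nonneg isOpen_layers.measurableSet hf₀

lemma PiecewiseCont.eqOn_zero_of_pwInt_eq_zero (hm : 0 ≤ m) (hl : 0 ≤ l)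
    (hf : PiecewiseCont m l f) (hf₀ : ∀ x ∈ layers m l, 0 ≤ f x) (hint : pwInt m l f = 0) :
    EqOn f 0 (layers m l) := by
  rw [pwInt_eq_setIntegral_layers hm hl hf.integrableOn_layers,
    setIntegral_eq_zero_iff_of_nonneg_ae
      (ae_restrict_of_forall_mem isOpen_layers.measurableSet hf₀) hf.integrableOn_layers] at hint
  exact Measure.eqOn_open_of_ae_eq hint isOpen_layers hf.continuousOn_layers continuousOn_const

lemma Profile.piecewiseCont (hf : Profile m l f) : PiecewiseCont m l f :=
  ⟨hf.1, f, hf.2, eqOn_refl f _⟩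

namespace PiecewiseC1

variable {fd : ℝ → ℝ}

lemma piecewiseCont (hm : 0 ≤ m) (hl : 0 ≤ l) (hf : PiecewiseC1 m l f fd) :
    PiecewiseCont m l f :=
  ⟨⟨f, hf.1.mono (Icc_subset_Icc_right hl), eqOn_refl f _⟩,
    ⟨f, hf.1.mono (Icc_subset_Icc_left (neg_nonpos.2 hm)), eqOn_refl f _⟩⟩

lemma piecewiseCont_deriv (hf : PiecewiseC1 m l f fd) : PiecewiseCont m l fd :=
  hf.2.2.2

lemma hasDerivAt (hf : PiecewiseC1 m l f fd) {x : ℝ} (hx : x ∈ layers m l) :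
    HasDerivAt f (fd x) x := by
  obtain ⟨-, hleft, hright, -⟩ := hf
  rcases hx with hx | hx
  · exact (hleft x (Ioo_subset_Ico_self hx)).hasDerivAt (Icc_mem_nhds hx.1 hx.2)
  · exact (hright x (Ioo_subset_Ioc_self hx)).hasDerivAt (Icc_mem_nhds hx.1 hx.2)

lemma deriv_eqOn_zero (hf : PiecewiseC1 m l f fd) (hf₀ : EqOn f 0 (layers m l)) :
    EqOn fd 0 (layers m l) := fun x hx =>
  (hf.hasDerivAt hx).unique <| (hasDerivAt_const x 0).congr_of_eventuallyEq <|
    hf₀.eventuallyEq_of_mem (isOpen_layers.mem_nhds hx)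

lemma eqOn_zero_Icc (hm : 0 < m) (hl : 0 < l) (hf : PiecewiseC1 m l f fd)
    (hf₀ : EqOn f 0 (layers m l)) : EqOn f 0 (Icc (-m) l) :=
  hf₀.of_subset_closure hf.1 continuousOn_const (layers_subset_Icc hm.le hl.le)
    (Icc_subset_closure_layers hm hl)

end PiecewiseC1

variable {ε0 δ0 φ ψ φd ψd : ℝ → ℝ}

lemma strain_eq_zero_of_energyE1_eq_zero (hm : 0 ≤ m) (hl : 0 ≤ l)
    (hε : PiecewiseCont m l ε0) (hδ : PiecewiseCont m l δ0)
    (hε₀ : ∀ x ∈ layers m l, 0 < ε0 x) (hδε₀ : ∀ x ∈ layers m l, 0 < δ0 x + ε0 x / 3)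
    (hφ : PiecewiseCont m l φ) (hψ : PiecewiseCont m l ψ)
    (hφd : PiecewiseCont m l φd) (hψd : PiecewiseCont m l ψd)
    (hE1 : energyE1 m l k ε0 δ0 φ ψ φd ψd = 0) :
    ∀ x ∈ layers m l, ψd x + k * φ x = 0 ∧ φd x - k * ψ x = 0 ∧ ψd x - k * φ x = 0 := by
  have hbulk := (hδ.add (hε.div_const 3)).mul ((hψd.add (hφ.const_mul k)).pow 2)
  have hshear := hε.mul
    (((hφd.sub (hψ.const_mul k)).pow 2).add ((hψd.sub (hφ.const_mul k)).pow 2))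
  have hbulk₀ : ∀ x ∈ layers m l, 0 ≤ (δ0 x + ε0 x / 3) * (ψd x + k * φ x) ^ 2 :=
    fun x hx => mul_nonneg (hδε₀ x hx).le (sq_nonneg _)
  have hshear₀ : ∀ x ∈ layers m l,
      0 ≤ ε0 x * ((φd x - k * ψ x) ^ 2 + (ψd x - k * φ x) ^ 2) :=
    fun x hx => mul_nonneg (hε₀ x hx).le (by positivity)
  have hbulk_int := hbulk.pwInt_nonneg hm hl hbulk₀
  have hshear_int := hshear.pwInt_nonneg hm hl hshear₀
  rw [energyE1] at hE1
  intro x hx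
  have hbulk_zero := hbulk.eqOn_zero_of_pwInt_eq_zero hm hl hbulk₀ (by linarith) hx
  have hshear_zero := hshear.eqOn_zero_of_pwInt_eq_zero hm hl hshear₀ (by linarith) hx
  have hbulk_sq := (mul_eq_zero.1 hbulk_zero).resolve_left (hδε₀ x hx).ne'
  have hshear_sq := (mul_eq_zero.1 hshear_zero).resolve_left (hε₀ x hx).ne'
  rw [add_eq_zero_iff_of_nonneg (sq_nonneg _) (sq_nonneg _), sq_eq_zero_iff, sq_eq_zero_iff]
    at hshear_sq
  exact ⟨sq_eq_zero_iff.1 hbulk_sq, hshear_sq⟩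

theorem E1_eq_zero_implies_zero_general (hm : 0 < m) (hl : 0 < l) (hk : k ≠ 0)
    (hε : PiecewiseCont m l ε0) (hδ : PiecewiseCont m l δ0)
    (hε₀ : ∀ x ∈ layers m l, 0 < ε0 x) (hδε₀ : ∀ x ∈ layers m l, 0 < δ0 x + ε0 x / 3)
    (hφ : PiecewiseC1 m l φ φd) (hψ : PiecewiseC1 m l ψ ψd)
    (hE1 : energyE1 m l k ε0 δ0 φ ψ φd ψd = 0) :
    ∀ x ∈ Icc (-m) l, φ x = 0 ∧ ψ x = 0 := by
  have hstrain := strain_eq_zero_of_energyE1_eq_zero hm.le hl.le hε hδ hε₀ hδε₀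
    (hφ.piecewiseCont hm.le hl.le) (hψ.piecewiseCont hm.le hl.le)
    hφ.piecewiseCont_deriv hψ.piecewiseCont_deriv hE1
  have hφ₀ : EqOn φ 0 (layers m l) := fun x hx => by
    obtain ⟨hdiv, -, hshear⟩ := hstrain x hx
    have hkφ : k * φ x = 0 := by linarith
    exact (mul_eq_zero.1 hkφ).resolve_left hk
  have hψ₀ : EqOn ψ 0 (layers m l) := fun x hx => by
    have hφd₀ : φd x = 0 := hφ.deriv_eqOn_zero hφ₀ hx
    have hkψ : k * ψ x = 0 := by linarith [(hstrain x hx).2.1]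
    exact (mul_eq_zero.1 hkψ).resolve_left hk
  exact fun x hx => ⟨hφ.eqOn_zero_Icc hm hl hφ₀ hx, hψ.eqOn_zero_Icc hm hl hψ₀ hx⟩

end

/-- If the viscous energy `E1(φ,ψ)` of an admissible pair vanishes, then `φ` and `ψ`
vanish identically on `[-m,ℓ]`. -/
theorem E1_eq_zero_implies_zero (m l g σ k : ℝ) (ρ0 p ε0 δ0 φ ψ φd ψd : ℝ → ℝ)
    (hm : 0 < m) (hl : 0 < l) (hg : 0 < g) (hσ : 0 ≤ σ) (hk : 0 < k)
    (hprof : ProfilesHyp m l ρ0 p ε0 δ0)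
    (hadm : Admissible m l φ ψ φd ψd)
    (hE1 : energyE1 m l k ε0 δ0 φ ψ φd ψd = 0) :
    ∀ x ∈ Icc (-m) l, φ x = 0 ∧ ψ x = 0 := by
  obtain ⟨-, -, hε, hδ, -, -, hε₀, hδ₀⟩ := hprof
  have hsub := layers_subset_Icc hm.le hl.le
  exact E1_eq_zero_implies_zero_general hm hl hk.ne' hε.piecewiseCont hδ.piecewiseCont
    (fun x hx => hε₀ x (hsub hx))
    (fun x hx => by linarith [hε₀ x (hsub hx), hδ₀ x (hsub hx)]) hadm.1 hadm.2.1 hE1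

end RT
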